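/- arXiv:2507.16599 — 2 statements merged into one kernel-verified Lean document; each statement's English description precedes it below -/
import Mathlib

section
/- Let d ≥ 3 and let μ be a Borel probability measure on 𝕋^d such that ∫|u|² dμ ≤ C ∫|u|² dx for all Laplace eigenfunctions u. Then μ is upper (d-2)-regular: there exists a constant C' such that μ(B_r(x₀)) ≤ C' r^{d-2} for all x₀ ∈ 𝕋^d and r ∈ (0,1). -/
open MeasureTheory Complex

/-- The character `x ↦ e^{2πi k·x}` on the torus `𝕋^d = (ℝ/ℤ)^d`. -/
noncomputable def torusChar {d : ℕ} (k : Fin d → ℤ) (x : Fin d → AddCircle (1:ℝ)) : ℂ :=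
  ∏ i, fourier (k i) (x i)

/-- The set of lattice points `k ∈ ℤ^d` with `|k|² = n`. -/
noncomputable def sphereFinset (d n : ℕ) : Finset (Fin d → ℤ) :=
  Finset.filter (fun k => ∑ i, (k i)^2 = (n : ℤ))
    (Finset.Icc (fun _ => -(n : ℤ)) (fun _ => (n : ℤ)))

/-- A Laplace eigenfunction on `𝕋^d` with eigenvalue `-4π²n`:
a trigonometric polynomial with frequencies on the sphere `|k|² = n`. -/
noncomputable def eigenfun {d : ℕ} (n : ℕ) (c : (Fin d → ℤ) → ℂ)
    (x : Fin d → AddCircle (1:ℝ)) : ℂ :=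
  ∑ k ∈ sphereFinset d n, c k * torusChar k x

/-- The Fourier coefficient `μ̂(k) = ∫ e^{-2πi k·x} dμ(x)` of a measure on the torus. -/
noncomputable def fourierCoeff' {d : ℕ} (μ : Measure (Fin d → AddCircle (1:ℝ)))
    (k : Fin d → ℤ) : ℂ :=
  ∫ x, (starRingEnd ℂ) (torusChar k x) ∂μ

/-- A product of numbers in the unit disc is as close to `1` as the sum of the deviations. -/
lemma norm_prod_sub_one_le_sum {ι : Type*} (s : Finset ι) (z : ι → ℂ) (hz : ∀ i ∈ s, ‖z i‖ ≤ 1) :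
    ‖∏ i ∈ s, z i - 1‖ ≤ ∑ i ∈ s, ‖z i - 1‖ := by
  classical
  induction s using Finset.induction_on with
  | empty => simp
  | insert a s ha ih =>
    rw [Finset.prod_insert ha, Finset.sum_insert ha]
    have h1 : ‖z a‖ ≤ 1 := hz a (Finset.mem_insert_self a s)
    have h2 := ih fun i hi => hz i (Finset.mem_insert_of_mem hi)
    calc ‖z a * ∏ i ∈ s, z i - 1‖ = ‖(z a - 1) + z a * (∏ i ∈ s, z i - 1)‖ := by
          congr 1; ring
      _ ≤ ‖z a - 1‖ + ‖z a‖ * ‖∏ i ∈ s, z i - 1‖ := by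
          rw [← norm_mul]; exact norm_add_le _ _
      _ ≤ ‖z a - 1‖ + 1 * ‖∏ i ∈ s, z i - 1‖ := by gcongr
      _ ≤ _ := by rw [one_mul]; gcongr

lemma norm_fourier_sub_one_le (k : ℤ) (y : AddCircle (1:ℝ)) :
    ‖fourier k y - 1‖ ≤ 2 * Real.pi * |(k : ℝ)| * ‖y‖ := by
  induction y using QuotientAddGroup.induction_on with
  | H t =>
    have hy : ((t : ℝ) : AddCircle (1:ℝ)) = ((t - round t : ℝ) : AddCircle (1:ℝ)) := by
      rw [AddCircle.coe_sub, eq_comm, sub_eq_self, AddCircle.coe_eq_zero_iff]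
      exact ⟨round t, by simp⟩
    have hn : ‖((t : ℝ) : AddCircle (1:ℝ))‖ = |t - round t| := UnitAddCircle.norm_eq
    change ‖fourier k ((t : ℝ) : AddCircle (1:ℝ)) - 1‖ ≤
      2 * Real.pi * |(k : ℝ)| * ‖((t : ℝ) : AddCircle (1:ℝ))‖
    rw [hn, hy, fourier_coe_apply]
    have h := Real.norm_exp_I_mul_ofReal_sub_one_le (x := 2 * Real.pi * k * (t - round t))
    have e : (2 * Real.pi * Complex.I * k * ((t - round t : ℝ) : ℂ) / ((1 : ℝ) : ℂ)) =
        Complex.I * ((2 * Real.pi * k * (t - round t) : ℝ) : ℂ) := by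
      push_cast; ring
    rw [e]
    refine h.trans_eq ?_
    rw [Real.norm_eq_abs, abs_mul, abs_mul, abs_of_pos Real.two_pi_pos]

lemma norm_fourier_apply (k : ℤ) (y : AddCircle (1:ℝ)) : ‖fourier k y‖ = 1 := by
  rw [fourier_apply, Circle.norm_coe]

lemma norm_torusChar {d : ℕ} (k : Fin d → ℤ) (x : Fin d → AddCircle (1:ℝ)) :
    ‖torusChar k x‖ = 1 := by
  simp only [torusChar, norm_prod, norm_fourier_apply, Finset.prod_const_one]

lemma torusChar_add {d : ℕ} (k : Fin d → ℤ) (x y : Fin d → AddCircle (1:ℝ)) :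
    torusChar k (x + y) = torusChar k x * torusChar k y := by
  simp [torusChar, ← Finset.prod_mul_distrib, fourier_apply, smul_add, AddCircle.toCircle_add]

lemma continuous_torusChar {d : ℕ} (k : Fin d → ℤ) :
    Continuous (torusChar (d := d) k) := by
  unfold torusChar
  fun_prop

lemma continuous_eigenfun {d : ℕ} (n : ℕ) (c : (Fin d → ℤ) → ℂ) :
    Continuous (eigenfun (d := d) n c) := by
  unfold eigenfun
  exact continuous_finsetSum _ fun k _ => continuous_const.mul (continuous_torusChar k)

lemma norm_torusChar_sub_one_le {d : ℕ} (k : Fin d → ℤ) (x : Fin d → AddCircle (1:ℝ)) {K r : ℝ}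
    (hK : ∀ i, |(k i : ℝ)| ≤ K) (hx : ‖x‖ ≤ r) :
    ‖torusChar k x - 1‖ ≤ d * (2 * Real.pi * K * r) := by
  calc ‖torusChar k x - 1‖ ≤ ∑ i, ‖fourier (k i) (x i) - 1‖ :=
        norm_prod_sub_one_le_sum _ _ fun i _ => (norm_fourier_apply _ _).le
    _ ≤ ∑ _i : Fin d, 2 * Real.pi * K * r := by
        refine Finset.sum_le_sum fun i _ => (norm_fourier_sub_one_le _ _).trans ?_
        have h0 : 0 ≤ K := (abs_nonneg _).trans (hK i)
        have h1 : ‖x i‖ ≤ r := (norm_le_pi_norm x i).trans hx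
        have := hK i
        gcongr
    _ = _ := by simp

lemma integral_fourier_eq_ite (k : ℤ) :
    ∫ y : AddCircle (1:ℝ), fourier k y = if k = 0 then 1 else 0 := by
  have h := (orthonormal_iff_ite.mp (orthonormal_fourier (T := 1))) 0 k
  rw [ContinuousMap.inner_toLp] at h
  rw [AddCircle.volume_eq_smul_haarAddCircle]
  simpa [eq_comm] using h

/-- Orthogonality of the characters of the torus. -/
lemma integral_torusChar_mul_conj {d : ℕ} (k l : Fin d → ℤ) :
    ∫ x, torusChar k x * (starRingEnd ℂ) (torusChar l x) = if k = l then 1 else 0 := by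
  have h : ∀ x : Fin d → AddCircle (1:ℝ), torusChar k x * (starRingEnd ℂ) (torusChar l x) =
      ∏ i, fourier (k i - l i) (x i) := by
    intro x
    simp only [torusChar, map_prod, ← Finset.prod_mul_distrib, ← fourier_neg, ← fourier_add,
      sub_eq_add_neg]
  simp_rw [h]
  rw [integral_fintype_prod_volume_eq_prod
    (fun i (y : AddCircle (1:ℝ)) => (fourier (k i - l i) y : ℂ))]
  simp_rw [integral_fourier_eq_ite, sub_eq_zero]
  rw [Finset.prod_ite_zero]
  simp [funext_iff]

/-- Parseval's identity for eigenfunctions on the torus. -/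
lemma integral_norm_sq_eigenfun {d : ℕ} (n : ℕ) (c : (Fin d → ℤ) → ℂ) :
    ∫ x : Fin d → AddCircle (1:ℝ), ‖eigenfun n c x‖ ^ 2 = ∑ k ∈ sphereFinset d n, ‖c k‖ ^ 2 := by
  have hint : ∀ k l : Fin d → ℤ, Integrable fun x : Fin d → AddCircle (1:ℝ) =>
      (c k * (starRingEnd ℂ) (c l)) * (torusChar k x * (starRingEnd ℂ) (torusChar l x)) :=
    fun k l => (continuous_const.mul ((continuous_torusChar k).mul
      (Complex.continuous_conj.comp (continuous_torusChar l)))).integrable_of_hasCompactSupport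
        (HasCompactSupport.of_compactSpace _)
  have h : ∀ x : Fin d → AddCircle (1:ℝ), ((‖eigenfun n c x‖ ^ 2 : ℝ) : ℂ) =
      ∑ k ∈ sphereFinset d n, ∑ l ∈ sphereFinset d n,
        (c k * (starRingEnd ℂ) (c l)) * (torusChar k x * (starRingEnd ℂ) (torusChar l x)) := by
    intro x
    rw [Complex.ofReal_pow, ← Complex.mul_conj', eigenfun, map_sum, Finset.sum_mul_sum]
    refine Finset.sum_congr rfl fun k _ => Finset.sum_congr rfl fun l _ => ?_
    rw [map_mul]; ring
  apply Complex.ofReal_injective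
  rw [← integral_complex_ofReal]
  simp_rw [h]
  rw [integral_finsetSum _ fun k _ => integrable_finsetSum _ fun l _ => hint k l]
  rw [Complex.ofReal_sum]
  refine Finset.sum_congr rfl fun k hk => ?_
  rw [integral_finsetSum _ fun l _ => hint k l]
  simp_rw [integral_const_mul, integral_torusChar_mul_conj]
  simp [hk, Complex.mul_conj']

/-- By the pigeonhole principle, some sphere of radius `O(M)` contains at least a constant times
`M ^ (d - 2)` lattice points. -/
lemma exists_card_sphereFinset_ge {d : ℕ} (hd : 2 ≤ d) (M : ℕ) :
    ∃ n : ℕ, n ≤ d * M ^ 2 ∧ ((M : ℝ) + 1) ^ (d - 2) / d ≤ (sphereFinset d n).card := by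
  classical
  have hd0 : (0 : ℝ) < d := by exact_mod_cast (by omega : 0 < d)
  let s : Finset (Fin d → ℤ) := Fintype.piFinset fun _ => Finset.Icc (0 : ℤ) M
  let t : Finset ℤ := Finset.Icc 0 ((d * M ^ 2 : ℕ) : ℤ)
  have hs : (s.card : ℝ) = ((M : ℝ) + 1) ^ d := by
    simp [s, Fintype.card_piFinset]
  have ht : (t.card : ℝ) ≤ d * ((M : ℝ) + 1) ^ 2 := by
    have h1 : (t.card : ℝ) = d * (M : ℝ) ^ 2 + 1 := by
      have : t.card = d * M ^ 2 + 1 := by simp only [t, Int.card_Icc]; omega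
      rw [this]; push_cast; ring
    have h2 : (1 : ℝ) ≤ d := by exact_mod_cast (by omega : 1 ≤ d)
    have h3 : (0 : ℝ) ≤ M := Nat.cast_nonneg M
    rw [h1]
    nlinarith [mul_nonneg hd0.le h3]
  have hmaps : ∀ k ∈ s, ∑ i, k i ^ 2 ∈ t := by
    intro k hk
    have hk' : ∀ i, 0 ≤ k i ∧ k i ≤ M := by simpa [s] using hk
    refine Finset.mem_Icc.mpr ⟨Finset.sum_nonneg fun i _ => sq_nonneg _, ?_⟩
    calc ∑ i, k i ^ 2 ≤ ∑ _i : Fin d, (M : ℤ) ^ 2 :=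
          Finset.sum_le_sum fun i _ => pow_le_pow_left₀ (hk' i).1 (hk' i).2 2
      _ = _ := by simp
  have hcard : t.card • (((M : ℝ) + 1) ^ (d - 2) / d) ≤ s.card := by
    rw [nsmul_eq_mul, hs]
    calc (t.card : ℝ) * (((M : ℝ) + 1) ^ (d - 2) / d)
        ≤ (d * ((M : ℝ) + 1) ^ 2) * (((M : ℝ) + 1) ^ (d - 2) / d) := by gcongr
      _ = ((M : ℝ) + 1) ^ (2 + (d - 2)) := by rw [pow_add]; field_simp
      _ = _ := by rw [Nat.add_sub_cancel' hd]
  obtain ⟨m, hm, hle⟩ := Finset.exists_le_card_fiber_of_nsmul_le_card_of_maps_to hmaps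
    ⟨0, Finset.mem_Icc.mpr ⟨le_rfl, Int.natCast_nonneg _⟩⟩ hcard
  obtain ⟨hm0, hm1⟩ := Finset.mem_Icc.mp hm
  lift m to ℕ using hm0
  refine ⟨m, by exact_mod_cast hm1, hle.trans ?_⟩
  refine Nat.cast_le.mpr (Finset.card_le_card fun k hk => ?_)
  have hsum : ∑ i, k i ^ 2 = (m : ℤ) := (Finset.mem_filter.mp hk).2
  have hi : ∀ i, k i ^ 2 ≤ (m : ℤ) := fun i =>
    hsum ▸ Finset.single_le_sum (f := fun i => k i ^ 2) (fun j _ => sq_nonneg _)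
      (Finset.mem_univ i)
  refine Finset.mem_filter.mpr ⟨Finset.mem_Icc.mpr ⟨fun i => ?_, fun i => ?_⟩, hsum⟩
  · have := hi i
    change -(m : ℤ) ≤ k i
    nlinarith
  · have := hi i
    change k i ≤ (m : ℤ)
    nlinarith

lemma abs_le_of_mem_sphereFinset {d n M : ℕ} (hn : n ≤ d * M ^ 2) {k : Fin d → ℤ}
    (hk : k ∈ sphereFinset d n) (i : Fin d) : |(k i : ℝ)| ≤ d * M := by
  have hsum : ∑ i, k i ^ 2 = (n : ℤ) := (Finset.mem_filter.mp hk).2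
  have hi : k i ^ 2 ≤ (n : ℤ) :=
    hsum ▸ Finset.single_le_sum (f := fun i => k i ^ 2) (fun j _ => sq_nonneg _)
      (Finset.mem_univ i)
  have h1 : (k i : ℝ) ^ 2 ≤ d * (M : ℝ) ^ 2 := by
    exact_mod_cast hi.trans (Int.ofNat_le.mpr hn)
  have h2 : (1 : ℝ) ≤ d := by exact_mod_cast i.pos
  refine abs_le_of_sq_le_sq (h1.trans ?_) (by positivity)
  rw [mul_pow]
  have : (d : ℝ) ≤ (d : ℝ) ^ 2 := by nlinarith
  gcongr

/-- The trace inequality for the sum of the characters of a sphere, centred at `x₀`, bounds the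
measure of any ball on which all these characters stay close to `1`. -/
lemma measureReal_ball_mul_card_le {d : ℕ} (μ : Measure (Fin d → AddCircle (1:ℝ)))
    [IsProbabilityMeasure μ] {C : ℝ} {n : ℕ}
    (htrace : ∀ c : (Fin d → ℤ) → ℂ,
      ∫ x, ‖eigenfun n c x‖ ^ 2 ∂μ ≤ C * ∫ x, ‖eigenfun n c x‖ ^ 2)
    (x₀ : Fin d → AddCircle (1:ℝ)) {r : ℝ} (hN : 0 < (sphereFinset d n).card)
    (hclose : ∀ k ∈ sphereFinset d n, ∀ y, ‖y‖ ≤ r → ‖torusChar k y - 1‖ ≤ 1 / 2) :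
    μ.real (Metric.ball x₀ r) * (sphereFinset d n).card ≤ 4 * C := by
  set N : ℝ := ((sphereFinset d n).card : ℝ) with hNdef
  have hNpos : 0 < N := Nat.cast_pos.mpr hN
  let c : (Fin d → ℤ) → ℂ := fun k => torusChar k (-x₀)
  have hrhs : ∫ x : Fin d → AddCircle (1:ℝ), ‖eigenfun n c x‖ ^ 2 = N := by
    rw [integral_norm_sq_eigenfun]
    simp [c, norm_torusChar, hNdef]
  have hlower : ∀ x ∈ Metric.ball x₀ r, N ^ 2 / 4 ≤ ‖eigenfun n c x‖ ^ 2 := by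
    intro x hx
    have hx' : ‖-x₀ + x‖ ≤ r := by
      rw [neg_add_eq_sub, ← dist_eq_norm]; exact (Metric.mem_ball.mp hx).le
    have h1 : ‖eigenfun n c x - N‖ ≤ N / 2 := by
      have h2 : eigenfun n c x - N = ∑ k ∈ sphereFinset d n, (torusChar k (-x₀ + x) - 1) := by
        simp [eigenfun, c, torusChar_add, hNdef]
      rw [h2]
      refine (norm_sum_le_of_le _ fun k hk => hclose k hk _ hx').trans_eq ?_
      rw [Finset.sum_const, nsmul_eq_mul, ← hNdef]; ring
    have h3 : N / 2 ≤ ‖eigenfun n c x‖ := by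
      have h4 := norm_sub_norm_le (N : ℂ) (eigenfun n c x)
      rw [norm_sub_rev, Complex.norm_real, Real.norm_of_nonneg hNpos.le] at h4
      linarith
    calc N ^ 2 / 4 = (N / 2) ^ 2 := by ring
      _ ≤ _ := by gcongr
  have hint : Integrable (fun x => ‖eigenfun n c x‖ ^ 2) μ :=
    ((continuous_eigenfun n c).norm.pow 2).integrable_of_hasCompactSupport
      (HasCompactSupport.of_compactSpace _)
  have h5 : N ^ 2 / 4 * μ.real (Metric.ball x₀ r) ≤ C * N := by
    calc N ^ 2 / 4 * μ.real (Metric.ball x₀ r)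
        ≤ ∫ x in Metric.ball x₀ r, ‖eigenfun n c x‖ ^ 2 ∂μ :=
          setIntegral_ge_of_const_le_real Metric.isOpen_ball.measurableSet
            (measure_ne_top _ _) hlower hint.integrableOn
      _ ≤ ∫ x, ‖eigenfun n c x‖ ^ 2 ∂μ :=
          setIntegral_le_integral hint (.of_forall fun x => by positivity)
      _ ≤ C * N := hrhs ▸ htrace c
  have h6 : N * (μ.real (Metric.ball x₀ r) * N) ≤ N * (4 * C) := by nlinarith
  exact le_of_mul_le_mul_left h6 hNpos

/-- Necessary condition for the trace inequality: for `d ≥ 3`, if a Borel probability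
measure `μ` on `𝕋^d` satisfies the trace inequality, then `μ` is upper `(d-2)`-regular:
`μ(B_r(x₀)) ≤ C' r^{d-2}` for all `x₀` and `r ∈ (0,1)`. -/
theorem stmt_8 {d : ℕ} (hd : 3 ≤ d) (μ : Measure (Fin d → AddCircle (1:ℝ)))
    [IsProbabilityMeasure μ] (C : ℝ)
    (htrace : ∀ (n : ℕ) (c : (Fin d → ℤ) → ℂ),
      ∫ x, ‖eigenfun n c x‖ ^ 2 ∂μ ≤ C * ∫ x, ‖eigenfun n c x‖ ^ 2) :
    ∃ C' : ℝ, ∀ (x₀ : Fin d → AddCircle (1:ℝ)) (r : ℝ), r ∈ Set.Ioo (0:ℝ) 1 →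
      μ (Metric.ball x₀ r) ≤ ENNReal.ofReal (C' * r ^ (d - 2)) := by
  have hd1 : (1 : ℝ) ≤ d := by exact_mod_cast (by omega : 1 ≤ d)
  set A : ℝ := 4 * Real.pi * (d : ℝ) ^ 2 with hA
  have hApos : 0 < A := by positivity
  refine ⟨4 * C * d * A ^ (d - 2), fun x₀ r hr => ?_⟩
  have hr0 : 0 < r := hr.1
  set M : ℕ := ⌊1 / (A * r)⌋₊ with hM
  have hMr : M * (A * r) ≤ 1 := by
    have := Nat.floor_le (show 0 ≤ 1 / (A * r) by positivity)
    rwa [le_div_iff₀ (by positivity)] at this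
  have hMr' : 1 / (A * r) ≤ (M : ℝ) + 1 := (Nat.lt_floor_add_one _).le
  obtain ⟨n, hn, hcard⟩ := exists_card_sphereFinset_ge (by omega : 2 ≤ d) M
  set N : ℝ := ((sphereFinset d n).card : ℝ) with hN
  have hNpos : 0 < N := lt_of_lt_of_le (by positivity) hcard
  have hball := measureReal_ball_mul_card_le μ (htrace n) x₀ (r := r) (Nat.cast_pos.mp hNpos)
    fun k hk y hy => (norm_torusChar_sub_one_le k y
      (fun i => abs_le_of_mem_sphereFinset hn hk i) hy).trans (by
        calc (d : ℝ) * (2 * Real.pi * (d * M) * r) = M * (A * r) / 2 := by rw [hA]; ring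
          _ ≤ 1 / 2 := by gcongr)
  rw [← hN] at hball
  have hNlow : 1 ≤ N * (d * (A * r) ^ (d - 2)) := by
    calc (1 : ℝ) = (1 / (A * r)) ^ (d - 2) / d * (d * (A * r) ^ (d - 2)) := by
          rw [div_pow, one_pow]; field_simp
      _ ≤ ((M : ℝ) + 1) ^ (d - 2) / d * (d * (A * r) ^ (d - 2)) := by gcongr
      _ ≤ _ := by gcongr
  refine (ENNReal.le_ofReal_iff_toReal_le (measure_ne_top _ _) ?_).mpr ?_
  · have hC : 0 ≤ 4 * C := le_trans (by positivity) hball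
    positivity
  · change μ.real (Metric.ball x₀ r) ≤ _
    calc μ.real (Metric.ball x₀ r)
        ≤ μ.real (Metric.ball x₀ r) * (N * (d * (A * r) ^ (d - 2))) :=
          le_mul_of_one_le_right measureReal_nonneg hNlow
      _ = μ.real (Metric.ball x₀ r) * N * (d * (A * r) ^ (d - 2)) := by ring
      _ ≤ 4 * C * (d * (A * r) ^ (d - 2)) := by gcongr
      _ = _ := by rw [mul_pow]; ring
end

section
/- Let α ∈ (0, 1/3) and let 𝒞_α ⊂ [0,1] be the fat Cantor set obtained by iteratively removing, at step n+1, the middle open interval of length α^{n+1} from each of the 2^n closed intervals of the previous generation. Then for every ε ∈ (0, 1 + ln 2/ln α), the characteristic function of 𝒞_α belongs to W^{ε,1}(0,1): the Gagliardo seminorm ∫₀¹∫₀¹ |𝟙_{𝒞_α}(x) - 𝟙_{𝒞_α}(y)|/|x-y|^{1+ε} dx dy is finite. -/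
/-- Lengths of the generation-`n` intervals in the fat Cantor construction with
parameter `α`: `ℓ₀ = 1`, `ℓ_{n+1} = (ℓ_n - α^{n+1})/2`. -/
noncomputable def cantorLen (α : ℝ) : ℕ → ℝ
  | 0 => 1
  | n + 1 => (cantorLen α n - α ^ (n + 1)) / 2

/-- Left endpoints of the generation-`n` intervals in the fat Cantor construction. -/
noncomputable def cantorLeft (α : ℝ) : ℕ → Set ℝ
  | 0 => {0}
  | n + 1 => cantorLeft α n ∪
      (fun a => a + cantorLen α n - cantorLen α (n + 1)) '' cantorLeft α n

/-- The fat Cantor set with parameter `α`: the intersection over `n` of the unions of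
the generation-`n` closed intervals. -/
noncomputable def fatCantor (α : ℝ) : Set ℝ :=
  ⋂ n : ℕ, ⋃ a ∈ cantorLeft α n, Set.Icc a (a + cantorLen α n)

open MeasureTheory Set
open scoped ENNReal

/-- The integrand of the Gagliardo `W^{ε,1}` seminorm of the characteristic function of `s`. -/
noncomputable def gagliardoIntegrand (ε : ℝ) (s : Set ℝ) (x y : ℝ) : ℝ≥0∞ :=
  ENNReal.ofReal (|s.indicator (fun _ => (1 : ℝ)) x - s.indicator (fun _ => (1 : ℝ)) y| /
    |x - y| ^ (1 + ε))

/-- The singular kernel `|t|^{-1-ε}`. -/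
noncomputable def gagliardoKernel (ε t : ℝ) : ℝ≥0∞ := ENNReal.ofReal (1 / |t| ^ (1 + ε))

lemma measurable_gagliardoKernel (ε : ℝ) : Measurable (gagliardoKernel ε) := by
  unfold gagliardoKernel
  fun_prop

lemma gagliardoKernel_neg (ε t : ℝ) : gagliardoKernel ε (-t) = gagliardoKernel ε t := by
  simp [gagliardoKernel]

lemma gagliardoIntegrand_eq_of_mem_notMem {ε : ℝ} {s : Set ℝ} {x y : ℝ} (hx : x ∈ s)
    (hy : y ∉ s) : gagliardoIntegrand ε s x y = gagliardoKernel ε (x - y) := by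
  simp [gagliardoIntegrand, gagliardoKernel, hx, hy]

lemma gagliardoIntegrand_comm (ε : ℝ) (s : Set ℝ) (x y : ℝ) :
    gagliardoIntegrand ε s x y = gagliardoIntegrand ε s y x := by
  rw [gagliardoIntegrand, gagliardoIntegrand, abs_sub_comm, abs_sub_comm x y]

lemma gagliardoIntegrand_eq_zero {ε : ℝ} {s : Set ℝ} {x y : ℝ} (h : x ∈ s ↔ y ∈ s) :
    gagliardoIntegrand ε s x y = 0 := by
  by_cases hx : x ∈ s
  · simp [gagliardoIntegrand, hx, h.1 hx]
  · simp [gagliardoIntegrand, hx, mt h.2 hx]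

lemma measurable_gagliardoIntegrand (ε : ℝ) {s : Set ℝ} (hs : MeasurableSet s) :
    Measurable fun p : ℝ × ℝ => gagliardoIntegrand ε s p.1 p.2 := by
  have h : Measurable (s.indicator (fun _ => (1 : ℝ))) := measurable_const.indicator hs
  unfold gagliardoIntegrand
  fun_prop

lemma lintegral_Ici_gagliardoKernel {ε δ : ℝ} (hε : 0 < ε) (hδ : 0 < δ) :
    ∫⁻ t in Ici δ, gagliardoKernel ε t = ENNReal.ofReal (δ ^ (-ε) / ε) := by
  have hcongr : ∫⁻ t in Ioi δ, gagliardoKernel ε t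
      = ∫⁻ t in Ioi δ, ENNReal.ofReal (t ^ (-(1 + ε))) := by
    refine setLIntegral_congr_fun measurableSet_Ioi fun t ht => ?_
    have h0 : 0 < t := hδ.trans ht
    simp only [gagliardoKernel]
    rw [abs_of_pos h0, Real.rpow_neg h0.le, one_div]
  rw [← setLIntegral_congr (Ioi_ae_eq_Ici (a := δ)), hcongr,
    ← ofReal_integral_eq_lintegral_ofReal (integrableOn_Ioi_rpow_of_lt (by linarith) hδ),
    integral_Ioi_rpow_of_lt (by linarith) hδ]
  · congr 1
    rw [show -(1 + ε) + 1 = -ε by ring, neg_div_neg_eq]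
  · filter_upwards [ae_restrict_mem measurableSet_Ioi] with t ht
    exact Real.rpow_nonneg (hδ.trans ht).le _

lemma lintegral_Ioo_rpow_neg {ε L : ℝ} (hε : 0 < ε) (hε1 : ε < 1) (hL : 0 < L) :
    ∫⁻ t in Ioo 0 L, ENNReal.ofReal (t ^ (-ε) / ε)
      = ENNReal.ofReal (L ^ (1 - ε) / (ε * (1 - ε))) := by
  have hint : IntegrableOn (fun t : ℝ => t ^ (-ε) / ε) (Ioc 0 L) :=
    ((intervalIntegrable_iff_integrableOn_Ioc_of_le hL.le).1
      (intervalIntegral.intervalIntegrable_rpow' (by linarith))).div_const ε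
  rw [setLIntegral_congr (Ioo_ae_eq_Ioc (a := (0 : ℝ)) (b := L)),
    ← ofReal_integral_eq_lintegral_ofReal hint, ← intervalIntegral.integral_of_le hL.le,
    intervalIntegral.integral_div, integral_rpow (Or.inl (by linarith))]
  · congr 1
    rw [show -ε + 1 = 1 - ε by ring, Real.zero_rpow (by linarith)]
    have : 1 - ε ≠ 0 := by linarith
    field_simp
    ring
  · filter_upwards [ae_restrict_mem measurableSet_Ioc] with t ht
    exact div_nonneg (Real.rpow_nonneg ht.1.le _) hε.le

lemma lintegral_compl_Ioo_gagliardoKernel_le {ε c d x : ℝ} (hε : 0 < ε) (hx : x ∈ Ioo c d) :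
    ∫⁻ y in (Ioo c d)ᶜ, gagliardoKernel ε (x - y)
      ≤ ENNReal.ofReal ((x - c) ^ (-ε) / ε) + ENNReal.ofReal ((d - x) ^ (-ε) / ε) := by
  have hk := measurable_gagliardoKernel ε
  rw [← lintegral_Ici_gagliardoKernel hε (sub_pos.2 hx.1),
    ← lintegral_Ici_gagliardoKernel hε (sub_pos.2 hx.2),
    ← lintegral_indicator measurableSet_Ici, ← lintegral_indicator measurableSet_Ici,
    ← lintegral_indicator measurableSet_Ioo.compl,
    ← lintegral_sub_left_eq_self ((Ici (x - c)).indicator (gagliardoKernel ε)) x,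
    ← lintegral_sub_right_eq_self ((Ici (d - x)).indicator (gagliardoKernel ε)) x,
    ← lintegral_add_left ((hk.indicator measurableSet_Ici).fun_comp (measurable_id'.const_sub x))]
  refine lintegral_mono fun y => ?_
  by_cases hy : y ∈ (Ioo c d)ᶜ
  · rw [indicator_of_mem hy]
    rcases le_or_gt y c with h | h
    · rw [indicator_of_mem (show x - y ∈ Ici (x - c) from sub_le_sub_left h x)]
      exact le_self_add
    · have h' : d ≤ y := not_lt.1 fun h' => hy ⟨h, h'⟩
      rw [indicator_of_mem (show y - x ∈ Ici (d - x) from sub_le_sub_right h' x),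
        ← gagliardoKernel_neg ε (y - x), neg_sub]
      exact le_add_self
  · rw [indicator_of_notMem hy]
    exact zero_le

lemma lintegral_Ioo_compl_Ioo_gagliardoKernel_le {ε c d : ℝ} (hε : 0 < ε) (hε1 : ε < 1)
    (hcd : c < d) :
    ∫⁻ x in Ioo c d, ∫⁻ y in (Ioo c d)ᶜ, gagliardoKernel ε (x - y)
      ≤ 2 * ENNReal.ofReal ((d - c) ^ (1 - ε) / (ε * (1 - ε))) := by
  set g : ℝ → ℝ≥0∞ := (Ioo 0 (d - c)).indicator fun t => ENNReal.ofReal (t ^ (-ε) / ε) with hg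
  have hgm : Measurable g := Measurable.indicator (by fun_prop) measurableSet_Ioo
  have hgint : ∫⁻ t, g t = ENNReal.ofReal ((d - c) ^ (1 - ε) / (ε * (1 - ε))) := by
    rw [hg, lintegral_indicator measurableSet_Ioo, lintegral_Ioo_rpow_neg hε hε1 (sub_pos.2 hcd)]
  rw [two_mul, ← hgint]
  nth_rw 1 [← lintegral_sub_right_eq_self g c]
  rw [← lintegral_sub_left_eq_self g d,
    ← lintegral_add_left (hgm.fun_comp (measurable_id'.sub_const c)),
    ← lintegral_indicator measurableSet_Ioo]
  refine lintegral_mono fun x => ?_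
  by_cases hx : x ∈ Ioo c d
  · rw [indicator_of_mem hx, hg,
      indicator_of_mem (show x - c ∈ Ioo 0 (d - c) from ⟨by linarith [hx.1], by linarith [hx.2]⟩),
      indicator_of_mem (show d - x ∈ Ioo 0 (d - c) from ⟨by linarith [hx.2], by linarith [hx.1]⟩)]
    exact lintegral_compl_Ioo_gagliardoKernel_le hε hx
  · rw [indicator_of_notMem hx]
    exact zero_le

/-- The Gagliardo seminorm on `ℝ` of the characteristic function of an interval. -/
lemma lintegral_gagliardoIntegrand_Ioo_le {ε c d : ℝ} (hε : 0 < ε) (hε1 : ε < 1) (hcd : c < d) :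
    ∫⁻ x, ∫⁻ y, gagliardoIntegrand ε (Ioo c d) x y
      ≤ 4 * ENNReal.ofReal ((d - c) ^ (1 - ε) / (ε * (1 - ε))) := by
  set I := Ioo c d with hI
  have hIm : MeasurableSet I := measurableSet_Ioo
  set k : ℝ × ℝ → ℝ≥0∞ :=
    (I ×ˢ Iᶜ).indicator fun p => gagliardoKernel ε (p.1 - p.2) with hk
  have hkm : Measurable k :=
    ((measurable_gagliardoKernel ε).comp (measurable_fst.sub measurable_snd)).indicator
      (hIm.prod hIm.compl)
  have hle : ∫⁻ x, ∫⁻ y, k (x, y) ≤ 2 * ENNReal.ofReal ((d - c) ^ (1 - ε) / (ε * (1 - ε))) := by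
    refine le_trans (le_of_eq ?_) (lintegral_Ioo_compl_Ioo_gagliardoKernel_le hε hε1 hcd)
    rw [← lintegral_indicator hIm]
    refine lintegral_congr fun x => ?_
    by_cases hx : x ∈ I
    · rw [indicator_of_mem hx, ← lintegral_indicator hIm.compl]
      refine lintegral_congr fun y => ?_
      by_cases hy : y ∈ I <;> simp [hk, hx, hy]
    · simp [hk, hx]
  have hsplit : ∀ x y, gagliardoIntegrand ε I x y = k (x, y) + k (y, x) := by
    intro x y
    by_cases hx : x ∈ I <;> by_cases hy : y ∈ I
    · simp [gagliardoIntegrand_eq_zero (iff_of_true hx hy), hk, hx, hy]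
    · simp [gagliardoIntegrand_eq_of_mem_notMem hx hy, hk, hx, hy]
    · rw [gagliardoIntegrand_comm]
      simp [gagliardoIntegrand_eq_of_mem_notMem hy hx, hk, hx, hy]
    · simp [gagliardoIntegrand_eq_zero (iff_of_false hx hy), hk, hx, hy]
  have hswap : ∫⁻ x, ∫⁻ y, k (y, x) = ∫⁻ x, ∫⁻ y, k (x, y) :=
    lintegral_lintegral_swap (f := fun x y => k (y, x)) (hkm.comp measurable_swap).aemeasurable
  calc ∫⁻ x, ∫⁻ y, gagliardoIntegrand ε I x y
      = ∫⁻ x, (∫⁻ y, k (x, y)) + ∫⁻ y, k (y, x) := by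
        refine lintegral_congr fun x => ?_
        simp_rw [hsplit]
        exact lintegral_add_left (hkm.comp measurable_prodMk_left) _
    _ = (∫⁻ x, ∫⁻ y, k (x, y)) + ∫⁻ x, ∫⁻ y, k (y, x) :=
        lintegral_add_left hkm.lintegral_prod_right' _
    _ ≤ 2 * ENNReal.ofReal ((d - c) ^ (1 - ε) / (ε * (1 - ε)))
        + 2 * ENNReal.ofReal ((d - c) ^ (1 - ε) / (ε * (1 - ε))) := by
        rw [hswap]
        exact add_le_add hle hle
    _ = 4 * ENNReal.ofReal ((d - c) ^ (1 - ε) / (ε * (1 - ε))) := by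
        rw [← add_mul]
        norm_num

lemma cantorLen_succ (α : ℝ) (n : ℕ) :
    cantorLen α (n + 1) = (cantorLen α n - α ^ (n + 1)) / 2 := rfl

lemma pow_le_cantorLen {α : ℝ} (hα : α ∈ Ioo (0 : ℝ) (1 / 3)) (n : ℕ) :
    α ^ n ≤ cantorLen α n := by
  induction n with
  | zero => simp [cantorLen]
  | succ n ih =>
    rw [cantorLen_succ]
    have h := pow_pos hα.1 n
    have h' := hα.2
    rw [pow_succ]
    nlinarith

/-- The open interval removed from the generation-`n` interval with left endpoint `a`. -/
noncomputable def cantorGap (α : ℝ) (n : ℕ) (a : ℝ) : Set ℝ :=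
  Ioo (a + cantorLen α (n + 1)) (a + cantorLen α n - cantorLen α (n + 1))

lemma cantorLeft_separated {α : ℝ} (hα : α ∈ Ioo (0 : ℝ) (1 / 3)) (n : ℕ) {a b : ℝ}
    (ha : a ∈ cantorLeft α n) (hb : b ∈ cantorLeft α n) :
    a = b ∨ a + cantorLen α n ≤ b ∨ b + cantorLen α n ≤ a := by
  induction n generalizing a b with
  | zero =>
    left
    rw [show a = 0 from ha, show b = 0 from hb]
  | succ n ih =>
    have hlen := cantorLen_succ α n
    have hpow := pow_pos hα.1 (n + 1)
    have hpos := hpow.trans_le (pow_le_cantorLen hα (n + 1))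
    rcases ha with ha | ⟨a, ha, rfl⟩ <;> rcases hb with hb | ⟨b, hb, rfl⟩ <;>
      rcases ih ha hb with rfl | h | h <;>
      first
      | exact Or.inl rfl
      | exact Or.inr (Or.inl (by linarith))
      | exact Or.inr (Or.inr (by linarith))

lemma cantorLeft_finite (α : ℝ) (n : ℕ) : (cantorLeft α n).Finite := by
  induction n with
  | zero => exact finite_singleton 0
  | succ n ih => exact ih.union (ih.image _)

lemma ncard_cantorLeft_le (α : ℝ) (n : ℕ) : (cantorLeft α n).ncard ≤ 2 ^ n := by
  induction n with
  | zero => simp [cantorLeft]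
  | succ n ih =>
    have hu := ncard_union_le (cantorLeft α n)
      ((fun a => a + cantorLen α n - cantorLen α (n + 1)) '' cantorLeft α n)
    have hi := ncard_image_le (f := fun a => a + cantorLen α n - cantorLen α (n + 1))
      (cantorLeft_finite α n)
    rw [cantorLeft, pow_succ]
    omega

lemma exists_mem_cantorGap {α x : ℝ} (hx : x ∈ Ioo (0 : ℝ) 1) (hxK : x ∉ fatCantor α) :
    ∃ n, ∃ a ∈ cantorLeft α n, x ∈ cantorGap α n a := by
  by_contra! hgap
  refine hxK (mem_iInter.2 fun n => ?_)
  induction n with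
  | zero => simpa [cantorLeft, cantorLen] using Ioo_subset_Icc_self hx
  | succ n ih =>
    obtain ⟨a, ha, hxa⟩ := mem_iUnion₂.1 ih
    rcases le_or_gt x (a + cantorLen α (n + 1)) with h | h
    · exact mem_iUnion₂.2 ⟨a, Or.inl ha, hxa.1, h⟩
    · refine mem_iUnion₂.2 ⟨_, Or.inr ⟨a, ha, rfl⟩, ?_, ?_⟩
      · exact not_lt.1 fun h' => hgap n a ha ⟨h, h'⟩
      · simpa using hxa.2

lemma notMem_cantorGap {α : ℝ} (hα : α ∈ Ioo (0 : ℝ) (1 / 3)) {n : ℕ} {a y : ℝ}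
    (ha : a ∈ cantorLeft α n) (hy : y ∈ fatCantor α) : y ∉ cantorGap α n a := by
  rintro ⟨hy1, hy2⟩
  obtain ⟨b, hb, hby1, hby2⟩ := mem_iUnion₂.1 (mem_iInter.1 hy (n + 1))
  have hlen := cantorLen_succ α n
  have hpow := pow_pos hα.1 (n + 1)
  have hpos := hpow.trans_le (pow_le_cantorLen hα (n + 1))
  rcases hb with hb | ⟨b, hb, rfl⟩ <;> rcases cantorLeft_separated hα n ha hb with rfl | h | h <;>
    linarith

lemma gagliardoIntegrand_fatCantor_le {α : ℝ} (hα : α ∈ Ioo (0 : ℝ) (1 / 3)) (ε : ℝ) {x y : ℝ}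
    (hx : x ∈ Ioo (0 : ℝ) 1) (hy : y ∈ Ioo (0 : ℝ) 1) :
    gagliardoIntegrand ε (fatCantor α) x y ≤
      ∑' n, ∑ a ∈ (cantorLeft_finite α n).toFinset,
        gagliardoIntegrand ε (cantorGap α n a) x y := by
  have key : ∀ {x y : ℝ}, x ∈ fatCantor α → y ∉ fatCantor α → y ∈ Ioo (0 : ℝ) 1 →
      gagliardoIntegrand ε (fatCantor α) x y ≤
        ∑' n, ∑ a ∈ (cantorLeft_finite α n).toFinset,
          gagliardoIntegrand ε (cantorGap α n a) x y := by
    intro x y hxK hyK hy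
    obtain ⟨n, a, ha, hya⟩ := exists_mem_cantorGap hy hyK
    have heq : gagliardoIntegrand ε (fatCantor α) x y
        = gagliardoIntegrand ε (cantorGap α n a) x y := by
      rw [gagliardoIntegrand_eq_of_mem_notMem hxK hyK, gagliardoIntegrand_comm,
        gagliardoIntegrand_eq_of_mem_notMem hya (notMem_cantorGap hα ha hxK),
        ← gagliardoKernel_neg, neg_sub]
    rw [heq]
    exact (Finset.single_le_sum
      (f := fun a => gagliardoIntegrand ε (cantorGap α n a) x y) (fun _ _ => zero_le)
      ((cantorLeft_finite α n).mem_toFinset.2 ha)).trans (ENNReal.le_tsum n)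
  by_cases hxK : x ∈ fatCantor α <;> by_cases hyK : y ∈ fatCantor α
  · rw [gagliardoIntegrand_eq_zero (iff_of_true hxK hyK)]
    exact zero_le
  · exact key hxK hyK hy
  · simp_rw [gagliardoIntegrand_comm ε _ x y]
    exact key hyK hxK hx
  · rw [gagliardoIntegrand_eq_zero (iff_of_false hxK hyK)]
    exact zero_le

lemma lintegral_gagliardoIntegrand_cantorGap_le {α ε : ℝ} (hα : 0 < α) (hε : 0 < ε) (hε1 : ε < 1)
    (n : ℕ) (a : ℝ) :
    ∫⁻ x, ∫⁻ y, gagliardoIntegrand ε (cantorGap α n a) x y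
      ≤ 4 * ENNReal.ofReal (1 / (ε * (1 - ε))) * ENNReal.ofReal (α ^ (1 - ε)) ^ (n + 1) := by
  have hlen := cantorLen_succ α n
  have hpow := pow_pos hα (n + 1)
  refine (lintegral_gagliardoIntegrand_Ioo_le hε hε1 (by linarith)).trans_eq ?_
  rw [show a + cantorLen α n - cantorLen α (n + 1) - (a + cantorLen α (n + 1)) = α ^ (n + 1) by
    linarith, mul_assoc, ← ENNReal.ofReal_pow (by positivity),
    ← ENNReal.ofReal_mul (by have := sub_pos.2 hε1; positivity), ← Real.rpow_natCast,
    ← Real.rpow_natCast, ← Real.rpow_mul hα.le, ← Real.rpow_mul hα.le, mul_comm (1 - ε),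
    one_div_mul_eq_div]

lemma two_mul_rpow_lt_one {α ε : ℝ} (hα : α ∈ Ioo (0 : ℝ) (1 / 3))
    (hε : ε < 1 + Real.log 2 / Real.log α) : 2 * α ^ (1 - ε) < 1 := by
  have hlog : Real.log α < 0 := Real.log_neg hα.1 (by linarith [hα.2])
  have hpos : 0 < α ^ (1 - ε) := Real.rpow_pos_of_pos hα.1 _
  rw [← Real.log_neg_iff (by positivity), Real.log_mul two_ne_zero hpos.ne',
    Real.log_rpow hα.1]
  have h := mul_lt_mul_of_neg_right (sub_left_lt_of_lt_add hε) hlog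
  rw [div_mul_cancel₀ _ hlog.ne] at h
  linarith

lemma lintegral_lintegral_tsum_sum {ι : Type*} (S : ℕ → Finset ι) {F : ℕ → ι → ℝ → ℝ → ℝ≥0∞}
    (hF : ∀ n a, Measurable fun p : ℝ × ℝ => F n a p.1 p.2) :
    ∫⁻ x, ∫⁻ y, ∑' n, ∑ a ∈ S n, F n a x y = ∑' n, ∑ a ∈ S n, ∫⁻ x, ∫⁻ y, F n a x y := by
  have hleft : ∀ n a x, Measurable (F n a x) := fun n a x => (hF n a).comp measurable_prodMk_left
  have hint : ∀ n a, Measurable fun x => ∫⁻ y, F n a x y := fun n a =>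
    (hF n a).lintegral_prod_right'
  have hinner : ∀ x, ∫⁻ y, ∑' n, ∑ a ∈ S n, F n a x y = ∑' n, ∑ a ∈ S n, ∫⁻ y, F n a x y := by
    intro x
    rw [lintegral_tsum fun n =>
      (Finset.measurable_fun_sum _ fun a _ => hleft n a x).aemeasurable]
    exact tsum_congr fun n => lintegral_finsetSum _ fun a _ => hleft n a x
  simp_rw [hinner]
  rw [lintegral_tsum fun n => (Finset.measurable_fun_sum _ fun a _ => hint n a).aemeasurable]
  exact tsum_congr fun n => lintegral_finsetSum _ fun a _ => hint n a

lemma tsum_sum_lintegral_gagliardoIntegrand_cantorGap_lt_top {α ε : ℝ}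
    (hα : α ∈ Ioo (0 : ℝ) (1 / 3)) (hε : ε ∈ Ioo (0 : ℝ) (1 + Real.log 2 / Real.log α)) :
    ∑' n, ∑ a ∈ (cantorLeft_finite α n).toFinset,
      ∫⁻ x, ∫⁻ y, gagliardoIntegrand ε (cantorGap α n a) x y < ⊤ := by
  have hlog : Real.log α < 0 := Real.log_neg hα.1 (by linarith [hα.2])
  have hε1 : ε < 1 := by
    linarith [hε.2, div_neg_of_pos_of_neg (Real.log_pos one_lt_two) hlog]
  have hgap := lintegral_gagliardoIntegrand_cantorGap_le hα.1 hε.1 hε1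
  have hq1 : 2 * ENNReal.ofReal (α ^ (1 - ε)) < 1 := by
    rw [← ENNReal.ofReal_ofNat 2, ← ENNReal.ofReal_mul zero_le_two, ENNReal.ofReal_lt_one]
    exact two_mul_rpow_lt_one hα hε.2
  have hqtop : ENNReal.ofReal (α ^ (1 - ε)) < ⊤ := ENNReal.ofReal_lt_top
  have hCtop : 4 * ENNReal.ofReal (1 / (ε * (1 - ε))) < ⊤ :=
    ENNReal.mul_lt_top (by simp) ENNReal.ofReal_lt_top
  generalize ENNReal.ofReal (α ^ (1 - ε)) = q at *
  generalize 4 * ENNReal.ofReal (1 / (ε * (1 - ε))) = C at *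
  have hle : ∀ n, ∑ a ∈ (cantorLeft_finite α n).toFinset,
      ∫⁻ x, ∫⁻ y, gagliardoIntegrand ε (cantorGap α n a) x y ≤ C * q * (2 * q) ^ n := by
    intro n
    have hcard : ((cantorLeft α n).ncard : ℝ≥0∞) ≤ 2 ^ n := by
      exact_mod_cast ncard_cantorLeft_le α n
    refine (Finset.sum_le_card_nsmul _ _ _ fun a _ => hgap n a).trans ?_
    rw [← ncard_eq_toFinset_card _ (cantorLeft_finite α n), nsmul_eq_mul]
    refine (mul_le_mul_left hcard _).trans_eq ?_
    rw [mul_pow, pow_succ]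
    ring
  refine (ENNReal.tsum_le_tsum hle).trans_lt ?_
  rw [ENNReal.tsum_mul_left, ENNReal.tsum_geometric]
  exact ENNReal.mul_lt_top (ENNReal.mul_lt_top hCtop hqtop)
    (ENNReal.inv_lt_top.2 (tsub_pos_of_lt hq1))

lemma lintegral_gagliardoIntegrand_fatCantor_lt_top {α ε : ℝ} (hα : α ∈ Ioo (0 : ℝ) (1 / 3))
    (hε : ε ∈ Ioo (0 : ℝ) (1 + Real.log 2 / Real.log α)) :
    ∫⁻ x in Ioo (0 : ℝ) 1, ∫⁻ y in Ioo (0 : ℝ) 1,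
      gagliardoIntegrand ε (fatCantor α) x y < ⊤ := by
  calc ∫⁻ x in Ioo (0 : ℝ) 1, ∫⁻ y in Ioo (0 : ℝ) 1, gagliardoIntegrand ε (fatCantor α) x y
      ≤ ∫⁻ x in Ioo (0 : ℝ) 1, ∫⁻ y in Ioo (0 : ℝ) 1,
          ∑' n, ∑ a ∈ (cantorLeft_finite α n).toFinset,
            gagliardoIntegrand ε (cantorGap α n a) x y :=
        setLIntegral_mono' measurableSet_Ioo fun x hx =>
          setLIntegral_mono' measurableSet_Ioo fun y hy =>
            gagliardoIntegrand_fatCantor_le hα ε hx hy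
    _ ≤ ∫⁻ x, ∫⁻ y, ∑' n, ∑ a ∈ (cantorLeft_finite α n).toFinset,
          gagliardoIntegrand ε (cantorGap α n a) x y :=
        (setLIntegral_le_lintegral _ _).trans
          (lintegral_mono fun x => setLIntegral_le_lintegral _ _)
    _ = ∑' n, ∑ a ∈ (cantorLeft_finite α n).toFinset,
          ∫⁻ x, ∫⁻ y, gagliardoIntegrand ε (cantorGap α n a) x y :=
        lintegral_lintegral_tsum_sum _ fun _ _ => measurable_gagliardoIntegrand ε measurableSet_Ioo
    _ < ⊤ := tsum_sum_lintegral_gagliardoIntegrand_cantorGap_lt_top hα hε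

/-- For `α ∈ (0, 1/3)` and `ε ∈ (0, 1 + ln 2 / ln α)`, the characteristic function of the
fat Cantor set `𝒞_α` has finite Gagliardo `W^{ε,1}` seminorm on `(0,1)`. -/
theorem stmt_14 (α : ℝ) (hα : α ∈ Set.Ioo (0:ℝ) (1/3)) (ε : ℝ)
    (hε : ε ∈ Set.Ioo (0:ℝ) (1 + Real.log 2 / Real.log α)) :
    (∫⁻ x in Set.Ioo (0:ℝ) 1, ∫⁻ y in Set.Ioo (0:ℝ) 1,
      ENNReal.ofReal
        (|Set.indicator (fatCantor α) (fun _ => (1:ℝ)) x -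
            Set.indicator (fatCantor α) (fun _ => (1:ℝ)) y| / |x - y| ^ (1 + ε))) < ⊤ := by
  exact lintegral_gagliardoIntegrand_fatCantor_lt_top hα hε
end
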